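/- Let ε > 0 and consider the undiscounted 1D magnitude learner on [0,∞): initialize v_1 = s_1 = h_1 = 0; in round t, if h_t = 0 set x̃_t = 0, otherwise set x̃_t = ε·erfi( s_t / (2√(v_t + 2h_t s_t + 16h_t²)) ) − ε·h_t/√(v_t + 2h_t s_t + 16h_t²) · exp( s_t² / (4(v_t + 2h_t s_t + 16h_t²)) ), where erfi(x) := ∫₀ˣ exp(u²) du; predict x_t = max(x̃_t, 0); receive a loss gradient g_t ∈ ℝ; set g_{t,clip} = the projection of g_t onto [−h_t, h_t] and h_{t+1} = max(h_t, |g_t|); set g̃_{t,clip} = g_{t,clip} if g_{t,clip}·x̃_t ≥ g_{t,clip}·x_t and g̃_{t,clip} = 0 otherwise; update v_{t+1} = v_t + g̃_{t,clip}² and s_{t+1} = s_t − g̃_{t,clip}. Then for all T ∈ ℕ_+, all gradient sequences g_{1:T}, and all comparators u ∈ [0,∞): Σ_{t=1}^T g_t·(x_t − u) ≤ ε·√(Σ_{t=1}^T g_t² + 2·G·S + 16·G²) + u·S + Σ_{t=1}^T |g_t − g_{t,clip}|·|x_t − u|, where G = max_{t∈[1:T]} |g_t| and S = 8·G·(1 +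 √(log(2u·ε^{-1} + 1)))² + 2·√(Σ_{t=1}^T g_t² + 16·G²)·(1 + √(log(2u·ε^{-1} + 1))). -/

import Mathlib

open scoped BigOperators

/-- The (rescaled) imaginary error function `erfi(x) = ∫₀ˣ exp(u²) du`. -/
noncomputable def erfi (x : ℝ) : ℝ := ∫ u in (0:ℝ)..x, Real.exp (u^2)

namespace MagLearner

/-- The potential in the variables `w = v + 2hs + 16h²` and `s` (with `ε = 1`). -/
noncomputable def Phi (w s : ℝ) : ℝ :=
  s * erfi (s / (2 * Real.sqrt w)) - Real.sqrt w * Real.exp (s^2 / (4 * w))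

noncomputable def E (w s : ℝ) : ℝ := Real.exp (s^2 / (4 * w)) / Real.sqrt w

lemma erfi_zero : erfi 0 = 0 := by simp [erfi]

lemma hasDerivAt_erfi (x : ℝ) : HasDerivAt erfi (Real.exp (x^2)) x := by
  have hc : Continuous (fun u : ℝ => Real.exp (u^2)) := by fun_prop
  exact intervalIntegral.integral_hasDerivAt_right (hc.intervalIntegrable _ _)
    (hc.stronglyMeasurableAtFilter _ _) hc.continuousAt

lemma erfi_neg (x : ℝ) : erfi (-x) = - erfi x := by
  have h := intervalIntegral.integral_comp_neg (a := 0) (b := x) (fun u : ℝ => Real.exp (u^2))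
  simp only [neg_sq, neg_zero] at h
  unfold erfi
  rw [h, intervalIntegral.integral_symm]

lemma erfi_nonneg {x : ℝ} (hx : 0 ≤ x) : 0 ≤ erfi x := by
  unfold erfi
  exact intervalIntegral.integral_nonneg hx (fun u _ => (Real.exp_pos _).le)

lemma anti_of_deriv {f f' : ℝ → ℝ} {a b : ℝ} (hab : a ≤ b)
    (hf : ∀ x ∈ Set.Icc a b, HasDerivAt f (f' x) x)
    (hf' : ∀ x ∈ Set.Icc a b, f' x ≤ 0) : f b ≤ f a := by
  have : AntitoneOn f (Set.Icc a b) := by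
    apply antitoneOn_of_deriv_nonpos (convex_Icc a b)
    · exact fun x hx => (hf x hx).continuousAt.continuousWithinAt
    · exact fun x hx => (hf x (interior_subset hx)).differentiableAt.differentiableWithinAt
    · intro x hx
      rw [(hf x (interior_subset hx)).deriv]
      exact hf' x (interior_subset hx)
  exact this ⟨le_refl _, hab⟩ ⟨hab, le_refl _⟩ hab

lemma exp_le_of_nonneg {y : ℝ} (hy : 0 ≤ y) : Real.exp (y^2) ≤ 2 * y * erfi y + 1 := by
  have := anti_of_deriv (f := fun y => Real.exp (y^2) - 2 * y * erfi y)
    (f' := fun y => - (2 * erfi y)) hy (by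
      intro x _
      have h1 : HasDerivAt (fun y : ℝ => Real.exp (y^2)) (Real.exp (x^2) * (2 * x)) x := by
        have := (hasDerivAt_pow 2 x).exp
        simpa using this
      have h2 := (((hasDerivAt_id x).const_mul 2).mul (hasDerivAt_erfi x))
      refine (h1.sub h2).congr_deriv ?_
      simp only [id]; ring) (by
      intro x hx
      have := erfi_nonneg hx.1
      linarith)
  simp [erfi_zero] at this
  linarith

lemma exp_le (y : ℝ) : Real.exp (y^2) ≤ 2 * y * erfi y + 1 := by
  rcases le_total 0 y with h | h
  · exact exp_le_of_nonneg h
  · have := exp_le_of_nonneg (y := -y) (by linarith)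
    rw [erfi_neg] at this
    simp only [neg_sq] at this
    linarith

lemma sq_arg {w : ℝ} (hw : 0 < w) (s : ℝ) : (s / (2 * Real.sqrt w))^2 = s^2 / (4 * w) := by
  rw [div_pow, mul_pow, Real.sq_sqrt hw.le]; norm_num

lemma hasDerivAt_arg {w s : ℝ → ℝ} {w' s' x : ℝ} (hw : HasDerivAt w w' x)
    (hs : HasDerivAt s s' x) (hp : 0 < w x) :
    HasDerivAt (fun τ => erfi (s τ / (2 * Real.sqrt (w τ))))
      (E (w x) (s x) * (s' / 2 - s x * w' / (4 * w x))) x := by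
  have hq : 0 < Real.sqrt (w x) := Real.sqrt_pos.mpr hp
  have h1 := hs.div ((hw.sqrt hp.ne').const_mul 2) (by positivity)
  have h2 := (hasDerivAt_erfi (s x / (2 * Real.sqrt (w x)))).comp x h1
  refine h2.congr_deriv ?_
  rw [sq_arg hp, E]
  have h3 : w x = Real.sqrt (w x) ^ 2 := (Real.sq_sqrt hp.le).symm
  set e := Real.exp (s x ^ 2 / (4 * w x))
  set q := Real.sqrt (w x)
  rw [h3]
  field_simp
  ring

lemma hasDerivAt_expo {w s : ℝ → ℝ} {w' s' x : ℝ} (hw : HasDerivAt w w' x)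
    (hs : HasDerivAt s s' x) (hp : 0 < w x) :
    HasDerivAt (fun τ => Real.exp (s τ ^2 / (4 * w τ)))
      (Real.exp (s x ^2 / (4 * w x)) * (s x * s' / (2 * w x) - s x ^2 * w' / (4 * w x ^2))) x := by
  have h1 := ((hs.pow 2).div (hw.const_mul 4) (by positivity)).exp
  refine h1.congr_deriv ?_
  simp only [Pi.pow_apply, Pi.div_apply]
  congr 1
  field_simp
  ring

lemma hasDerivAt_E {w s : ℝ → ℝ} {w' s' x : ℝ} (hw : HasDerivAt w w' x)
    (hs : HasDerivAt s s' x) (hp : 0 < w x) :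
    HasDerivAt (fun τ => E (w τ) (s τ))
      (E (w x) (s x) * (s x * s' / (2 * w x) - s x ^2 * w' / (4 * w x ^2) - w' / (2 * w x))) x := by
  have hq : 0 < Real.sqrt (w x) := Real.sqrt_pos.mpr hp
  have h1 := (hasDerivAt_expo hw hs hp).div (hw.sqrt hp.ne') hq.ne'
  refine h1.congr_deriv ?_
  rw [E]
  have h3 : w x = Real.sqrt (w x) ^ 2 := (Real.sq_sqrt hp.le).symm
  set e := Real.exp (s x ^ 2 / (4 * w x))
  set q := Real.sqrt (w x)
  rw [h3]
  field_simp
  try ring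

lemma hasDerivAt_Phi {w s : ℝ → ℝ} {w' s' x : ℝ} (hw : HasDerivAt w w' x)
    (hs : HasDerivAt s s' x) (hp : 0 < w x) :
    HasDerivAt (fun τ => Phi (w τ) (s τ))
      (erfi (s x / (2 * Real.sqrt (w x))) * s' - E (w x) (s x) * w' / 2) x := by
  have hq : 0 < Real.sqrt (w x) := Real.sqrt_pos.mpr hp
  have h1 := (hs.mul (hasDerivAt_arg hw hs hp)).sub ((hw.sqrt hp.ne').mul (hasDerivAt_expo hw hs hp))
  refine h1.congr_deriv ?_
  rw [E]
  have h3 : w x = Real.sqrt (w x) ^ 2 := (Real.sq_sqrt hp.le).symm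
  set e := Real.exp (s x ^ 2 / (4 * w x))
  set q := Real.sqrt (w x)
  rw [h3]
  field_simp
  ring

lemma E_pos {w : ℝ} (hw : 0 < w) (s : ℝ) : 0 < E w s :=
  div_pos (Real.exp_pos _) (Real.sqrt_pos.mpr hw)

lemma Phi_anti {w₁ w₂ : ℝ} (s : ℝ) (h1 : 0 < w₁) (h2 : w₁ ≤ w₂) : Phi w₂ s ≤ Phi w₁ s := by
  apply anti_of_deriv (f := fun w => Phi w s) h2
  · intro x hx
    exact hasDerivAt_Phi (hasDerivAt_id x) (hasDerivAt_const x s) (by simpa using h1.trans_le hx.1)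
  · intro x hx
    have := E_pos (h1.trans_le hx.1) s
    linarith

lemma Phi_lower {w : ℝ} (hw : 0 < w) (s : ℝ) : - Real.sqrt w ≤ Phi w s := by
  have hq : 0 < Real.sqrt w := Real.sqrt_pos.mpr hw
  have h := exp_le (s / (2 * Real.sqrt w))
  rw [sq_arg hw] at h
  have h2 := mul_le_mul_of_nonneg_left h hq.le
  have h3 : Real.sqrt w * (2 * (s / (2 * Real.sqrt w)) * erfi (s / (2 * Real.sqrt w)) + 1)
    = s * erfi (s / (2 * Real.sqrt w)) + Real.sqrt w := by
    field_simp
  rw [h3] at h2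
  unfold Phi
  linarith

lemma second_ineq {h s w d : ℝ} (hh : 0 < h) (hs : -h ≤ s) (hw : 2 * h * s + 16 * h^2 ≤ w)
    (hd : 0 ≤ d) (hd2 : d ≤ 2 * h) :
    -(1/2) - d * s / w + d^2 * s^2 / (2 * w^2) + d^2 / w ≤ 0 := by
  have hwp : 14 * h^2 ≤ w := by nlinarith
  have hw0 : 0 < w := by nlinarith [sq_pos_of_pos hh]
  obtain ⟨q, hq⟩ : ∃ q, q = d * s / w := ⟨_, rfl⟩
  obtain ⟨r, hr⟩ : ∃ r, r = d^2 / w := ⟨_, rfl⟩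
  have e : -(1/2) - d * s / w + d^2 * s^2 / (2 * w^2) + d^2 / w = -(1/2) - q + q^2/2 + r := by
    rw [hq, hr]; field_simp
  rw [e]
  have hd3 : d^2 ≤ 4 * h^2 := by nlinarith
  rcases le_total 0 s with h0 | h0
  · have hq0 : 0 ≤ q := by rw [hq]; positivity
    have hq1 : q ≤ 1 := by
      rw [hq, div_le_one hw0]; nlinarith [mul_le_mul_of_nonneg_right hd2 h0, sq_pos_of_pos hh]
    have hr1 : r ≤ 1/4 := by
      rw [hr, div_le_iff₀ hw0]; nlinarith [mul_nonneg hh.le h0]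
    nlinarith
  · have hq0 : q ≤ 0 := by
      rw [hq]; exact div_nonpos_of_nonpos_of_nonneg (by nlinarith) hw0.le
    have hq1 : -(1/7) ≤ q := by
      rw [hq, le_div_iff₀ hw0]
      nlinarith [mul_nonneg hd (by linarith : 0 ≤ s + h), mul_nonneg hh.le (by linarith : 0 ≤ 2*h - d)]
    have hr1 : r ≤ 2/7 := by
      rw [hr, div_le_iff₀ hw0]; nlinarith
    nlinarith

/-- Algorithm's prediction with `ε = 1`. -/
noncomputable def pred (h w s : ℝ) : ℝ := erfi (s / (2 * Real.sqrt w)) - h * E w s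

lemma key {h v s c : ℝ} (hh : 0 < h) (hv : 0 ≤ v) (hs : -h ≤ s) (hs' : -h ≤ s - c)
    (hc1 : -h ≤ c) (hc2 : c ≤ h) :
    Phi (v + c^2 + 2 * h * (s - c) + 16 * h^2) (s - c)
      + c * pred h (v + 2 * h * s + 16 * h^2) s ≤ Phi (v + 2 * h * s + 16 * h^2) s := by
  obtain ⟨X, hX⟩ : ∃ X, X = pred h (v + 2 * h * s + 16 * h^2) s := ⟨_, rfl⟩
  rw [← hX]
  let W : ℝ → ℝ := fun τ => v + (c*τ)^2 + 2 * h * (s - c*τ) + 16 * h^2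
  let Sg : ℝ → ℝ := fun τ => s - c*τ
  have hSg : ∀ τ ∈ Set.Icc (0:ℝ) 1, -h ≤ Sg τ := by
    intro τ hτ
    have : Sg τ = (1-τ) * s + τ * (s - c) := by simp only [Sg]; ring
    rw [this]
    nlinarith [mul_le_mul_of_nonneg_left hs (by linarith [hτ.2] : 0 ≤ 1 - τ),
      mul_le_mul_of_nonneg_left hs' hτ.1]
  have hWge : ∀ τ, 2 * h * Sg τ + 16 * h^2 ≤ W τ := by
    intro τ; simp only [W, Sg]; nlinarith [sq_nonneg (c*τ)]
  have hWpos : ∀ τ ∈ Set.Icc (0:ℝ) 1, 0 < W τ := by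
    intro τ hτ
    nlinarith [hWge τ, hSg τ hτ, sq_pos_of_pos hh]
  have dS : ∀ τ, HasDerivAt Sg (-c) τ := by
    intro τ
    have := ((hasDerivAt_id τ).const_mul c).const_sub s
    simpa using this
  have dW : ∀ τ, HasDerivAt W (-(2 * c * (h - c * τ))) τ := by
    intro τ
    have h1 : HasDerivAt (fun τ : ℝ => c * τ) c τ := by
      simpa using (hasDerivAt_id τ).const_mul c
    have h2 := (((h1.pow 2).const_add v).add ((dS τ).const_mul (2*h))).add_const (16*h^2)
    refine h2.congr_deriv ?_
    simp; ring
  let D : ℝ → ℝ := fun τ => c * ((h - c * τ) * E (W τ) (Sg τ) - erfi (Sg τ / (2 * Real.sqrt (W τ))) + X)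
  have d1 : ∀ τ ∈ Set.Icc (0:ℝ) 1, HasDerivAt (fun τ => Phi (W τ) (Sg τ) + c * τ * X) (D τ) τ := by
    intro τ hτ
    have h1 : HasDerivAt (fun τ : ℝ => c * τ * X) (c * X) τ := by
      simpa using ((hasDerivAt_id τ).const_mul c).mul_const X
    refine ((hasDerivAt_Phi (dW τ) (dS τ) (hWpos τ hτ)).add h1).congr_deriv ?_
    simp only [D]; ring
  have d2 : ∀ τ ∈ Set.Icc (0:ℝ) 1, HasDerivAt D (c^2 * E (W τ) (Sg τ) *
      (-(1/2) - (h - c*τ) * Sg τ / W τ + (h-c*τ)^2 * (Sg τ)^2 / (2 * (W τ)^2) + (h-c*τ)^2 / W τ)) τ := by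
    intro τ hτ
    have hp := hWpos τ hτ
    have h0 : HasDerivAt (fun τ : ℝ => h - c * τ) (-c) τ := by
      simpa using ((hasDerivAt_id τ).const_mul c).const_sub h
    have h1 := (((h0.mul (hasDerivAt_E (dW τ) (dS τ) hp)).sub
      (hasDerivAt_arg (dW τ) (dS τ) hp)).add_const X).const_mul c
    refine h1.congr_deriv ?_
    field_simp
    ring
  have n2 : ∀ τ ∈ Set.Icc (0:ℝ) 1, c^2 * E (W τ) (Sg τ) *
      (-(1/2) - (h - c*τ) * Sg τ / W τ + (h-c*τ)^2 * (Sg τ)^2 / (2 * (W τ)^2) + (h-c*τ)^2 / W τ) ≤ 0 := by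
    intro τ hτ
    have hp := hWpos τ hτ
    apply mul_nonpos_of_nonneg_of_nonpos
    · exact mul_nonneg (sq_nonneg c) (E_pos hp _).le
    · have hcτ : |c * τ| ≤ h := by
        rw [abs_mul, abs_of_nonneg hτ.1]
        have : |c| ≤ h := abs_le.mpr ⟨hc1, hc2⟩
        nlinarith [abs_nonneg c, hτ.1, hτ.2]
      have := abs_le.mp hcτ
      exact second_ineq hh (hSg τ hτ) (hWge τ) (by linarith) (by linarith)
  have D0 : D 0 = 0 := by
    simp only [D, W, Sg, hX, pred]; simp
  have n1 : ∀ τ ∈ Set.Icc (0:ℝ) 1, D τ ≤ 0 := by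
    intro τ hτ
    rw [← D0]
    exact anti_of_deriv hτ.1 (fun x hx => d2 x ⟨hx.1, hx.2.trans hτ.2⟩)
      (fun x hx => n2 x ⟨hx.1, hx.2.trans hτ.2⟩)
  have fin := anti_of_deriv zero_le_one d1 n1
  simpa [W, Sg] using fin

/-- The prediction beats `u` beyond the threshold `S`. -/
lemma pred_ge {G v s a U : ℝ} (hG : 0 < G) (hv : 0 ≤ v) (ha : 1 ≤ a)
    (hU : Real.exp ((a-1)^2) = 2 * U + 1)
    (hs : 8 * G * a^2 + 2 * Real.sqrt (v + 16 * G^2) * a ≤ s) :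
    U ≤ pred G (v + 2 * G * s + 16 * G^2) s := by
  have hA : 0 < v + 16 * G^2 := by positivity
  have hA' := Real.sqrt_pos.mpr hA
  have hs0 : 0 < s := by
    have : 0 < 8 * G * a^2 + 2 * Real.sqrt (v + 16 * G^2) * a := by positivity
    linarith
  obtain ⟨w, hw⟩ : ∃ w, w = v + 2 * G * s + 16 * G^2 := ⟨_, rfl⟩
  rw [← hw]
  have hwp : 0 < w := by rw [hw]; positivity
  obtain ⟨r, hr⟩ : ∃ r, r = Real.sqrt w := ⟨_, rfl⟩
  have hrp : 0 < r := by rw [hr]; exact Real.sqrt_pos.mpr hwp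
  have hr2 : r^2 = w := by rw [hr]; exact Real.sq_sqrt hwp.le
  obtain ⟨y, hy⟩ : ∃ y, y = s / (2 * r) := ⟨_, rfl⟩
  have hsy : s = 2 * y * r := by rw [hy]; field_simp
  have hay : a ≤ y := by
    rw [hy, le_div_iff₀ (by positivity)]
    apply (sq_le_sq₀ (by positivity) hs0.le).mp
    obtain ⟨q, hq⟩ : ∃ q, q = Real.sqrt (v + 16 * G^2) := ⟨_, rfl⟩
    have hq2 : q^2 = v + 16 * G^2 := by rw [hq]; exact Real.sq_sqrt hA.le
    rw [← hq] at hs hA'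
    have : (a * (2 * r))^2 = 4 * a^2 * (q^2 + 2 * G * s) := by
      rw [hq2]; rw [mul_pow, mul_pow, hr2, hw]; ring
    rw [this]
    have e1 : 0 ≤ s - 8 * G * a^2 - 2 * q * a := by linarith
    have e2 : 2 * q * a ≤ s := by nlinarith [mul_pos hG (by positivity : 0 < a^2)]
    have e3 : 0 ≤ 2 * q * a := by positivity
    nlinarith [mul_nonneg hs0.le e1, mul_le_mul_of_nonneg_left e2 e3]
  have hy1 : 1 ≤ y := ha.trans hay
  have hGr : 4 * G * y ≤ r := by
    have : 4 * G * y * r ≤ r * r := by nlinarith [sq_nonneg G]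
    exact le_of_mul_le_mul_right this hrp
  have hexp := exp_le y
  have hyarg : s^2 / (4 * w) = y^2 := by rw [← sq_arg hwp, ← hr, ← hy]
  unfold pred E
  rw [hyarg, ← hr, ← hy]
  have h1 : G * (Real.exp (y^2) / r) ≤ Real.exp (y^2) / (4 * y) := by
    rw [← mul_div_assoc, div_le_div_iff₀ hrp (by positivity)]
    nlinarith [Real.exp_pos (y^2)]
  have h2 : (Real.exp (y^2) - 1) / (2 * y) ≤ erfi y := by
    rw [div_le_iff₀ (by positivity)]; linarith
  have h3 : Real.exp ((a-1)^2) ≤ Real.exp ((y-1)^2) := by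
    apply Real.exp_le_exp.mpr; nlinarith
  have h4 : Real.exp (y^2) = Real.exp ((y-1)^2) * Real.exp (2*y-1) := by
    rw [← Real.exp_add]; congr 1; ring
  have h5 : 2 * y ≤ Real.exp (2*y-1) := by linarith [Real.add_one_le_exp (2*y-1)]
  have h6 : U ≤ (Real.exp (y^2) - 2) / (4 * y) := by
    rw [le_div_iff₀ (by positivity)]
    have := mul_le_mul_of_nonneg_left h5 (Real.exp_pos ((y-1)^2)).le
    nlinarith
  have h7 : (Real.exp (y^2) - 2) / (4 * y) = (Real.exp (y^2) - 1) / (2 * y) - Real.exp (y^2) / (4 * y) := by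
    field_simp; ring
  linarith

lemma final_bound {eps G v V s u S a : ℝ} (heps : 0 < eps) (hG : 0 < G) (hv : 0 ≤ v) (hvV : v ≤ V)
    (hu : 0 ≤ u) (ha : 1 ≤ a) (hs : -G ≤ s)
    (hU : Real.exp ((a-1)^2) = 2 * (u * eps⁻¹) + 1)
    (hS : S = 8 * G * a^2 + 2 * Real.sqrt (V + 16 * G^2) * a) :
    u * s - eps * Phi (v + 2 * G * s + 16 * G^2) s
      ≤ eps * Real.sqrt (V + 2 * G * S + 16 * G^2) + u * S := by
  have base : ∀ σ, -G ≤ σ → σ ≤ S → u * σ - eps * Phi (v + 2 * G * σ + 16 * G^2) σ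
      ≤ eps * Real.sqrt (V + 2 * G * S + 16 * G^2) + u * S := by
    intro σ h1 h2
    have hw : 0 < v + 2 * G * σ + 16 * G^2 := by nlinarith [sq_pos_of_pos hG]
    have l := Phi_lower hw σ
    have m : Real.sqrt (v + 2 * G * σ + 16 * G^2) ≤ Real.sqrt (V + 2 * G * S + 16 * G^2) := by
      apply Real.sqrt_le_sqrt; nlinarith
    have := mul_le_mul_of_nonneg_left (by linarith : -Phi (v + 2 * G * σ + 16 * G^2) σ ≤ Real.sqrt (V + 2 * G * S + 16 * G^2)) heps.le
    have := mul_le_mul_of_nonneg_left h2 hu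
    linarith
  rcases le_total s S with h | h
  · exact base s hs h
  have hS0 : 0 ≤ S := by rw [hS]; positivity
  refine le_trans ?_ (base S (by linarith) le_rfl)
  refine anti_of_deriv (f := fun σ => u * σ - eps * Phi (v + 2 * G * σ + 16 * G^2) σ)
    (f' := fun σ => u - eps * pred G (v + 2 * G * σ + 16 * G^2) σ) h ?_ ?_
  · intro x hx
    have hx0 : 0 ≤ x := hS0.trans hx.1
    have hw : 0 < v + 2 * G * x + 16 * G^2 := by positivity
    have dw : HasDerivAt (fun σ => v + 2 * G * σ + 16 * G^2) (2 * G) x := by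
      simpa using (((hasDerivAt_id x).const_mul (2*G)).const_add v).add_const (16*G^2)
    have d1 := ((hasDerivAt_id x).const_mul u).sub ((hasDerivAt_Phi dw (hasDerivAt_id x) hw).const_mul eps)
    refine d1.congr_deriv ?_
    simp only [pred, id]; ring
  · intro x hx
    have := pred_ge (s := x) hG hv ha hU (by
      have : Real.sqrt (v + 16 * G^2) ≤ Real.sqrt (V + 16 * G^2) := Real.sqrt_le_sqrt (by linarith)
      have := hx.1
      rw [hS] at this
      nlinarith)
    have h2 := mul_le_mul_of_nonneg_left this heps.le
    have : eps * (u * eps⁻¹) = u := by field_simp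
    linarith

lemma w_mono {v h h' σ : ℝ} (hp : 0 ≤ h) (hm : h ≤ h') (hs : -h ≤ σ) :
    v + 2 * h * σ + 16 * h^2 ≤ v + 2 * h' * σ + 16 * h'^2 := by
  nlinarith [mul_nonneg (sub_nonneg.mpr hm) (by linarith : 0 ≤ 2 * σ + 2 * h),
    mul_nonneg (sub_nonneg.mpr hm) hp, mul_nonneg (sub_nonneg.mpr hm) (hp.trans hm)]

end MagLearner

open MagLearner

set_option maxHeartbeats 1000000 in
/-- Undiscounted regret guarantee for the 1D magnitude learner on `[0,∞)`
(Algorithm 2). -/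
theorem magnitude_learner_undiscounted_regret
    (eps : ℝ) (heps : 0 < eps)
    (v s h xt x g gclip gt : ℕ → ℝ)
    (hv1 : v 1 = 0) (hs1 : s 1 = 0) (hh1 : h 1 = 0)
    (hxt : ∀ t, 1 ≤ t →
      (h t = 0 → xt t = 0) ∧
      (h t ≠ 0 → xt t =
        eps * erfi (s t / (2 * Real.sqrt (v t + 2 * h t * s t + 16 * (h t)^2)))
        - eps * h t / Real.sqrt (v t + 2 * h t * s t + 16 * (h t)^2)
          * Real.exp ((s t)^2 / (4 * (v t + 2 * h t * s t + 16 * (h t)^2)))))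
    (hx : ∀ t, 1 ≤ t → x t = max (xt t) 0)
    (hgclip : ∀ t, 1 ≤ t → gclip t = max (-(h t)) (min (g t) (h t)))
    (hh : ∀ t, 1 ≤ t → h (t+1) = max (h t) |g t|)
    (hgt : ∀ t, 1 ≤ t →
      gt t = if gclip t * xt t ≥ gclip t * x t then gclip t else 0)
    (hvrec : ∀ t, 1 ≤ t → v (t+1) = v t + (gt t)^2)
    (hsrec : ∀ t, 1 ≤ t → s (t+1) = s t - gt t)
    (T : ℕ) (hT : 1 ≤ T)
    (u : ℝ) (hu : 0 ≤ u)
    (G S : ℝ)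
    (hG : G = (Finset.Icc 1 T).sup' (Finset.nonempty_Icc.mpr hT) (fun t => |g t|))
    (hS : S = 8 * G * (1 + Real.sqrt (Real.log (2 * u * eps⁻¹ + 1)))^2
        + 2 * Real.sqrt ((∑ t ∈ Finset.Icc 1 T, (g t)^2) + 16 * G^2)
          * (1 + Real.sqrt (Real.log (2 * u * eps⁻¹ + 1)))) :
    ∑ t ∈ Finset.Icc 1 T, g t * (x t - u)
      ≤ eps * Real.sqrt ((∑ t ∈ Finset.Icc 1 T, (g t)^2) + 2 * G * S + 16 * G^2)
        + u * S
        + ∑ t ∈ Finset.Icc 1 T, |g t - gclip t| * |x t - u| := by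
  have hG0 : ∀ t, 1 ≤ t → 0 ≤ h t := by
    intro t ht
    induction t, ht using Nat.le_induction with
    | base => rw [hh1]
    | succ t ht ih => rw [hh t ht]; exact ih.trans (le_max_left _ _)
  -- invariants
  have inv : ∀ t, 1 ≤ t → 0 ≤ v t ∧ -(h t) ≤ s t ∧ (h t = 0 → v t = 0 ∧ s t = 0)
      ∧ v t ≤ ∑ i ∈ Finset.Ico 1 t, (g i)^2
      ∧ (∑ i ∈ Finset.Ico 1 t, gclip i * (x i - u)) + eps * Phi (v t + 2 * h t * s t + 16 * (h t)^2) (s t)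
        ≤ u * s t := by
    intro t ht
    induction t, ht using Nat.le_induction with
    | base => simp [hv1, hs1, hh1, Phi]
    | succ t ht ih =>
      obtain ⟨i1, i2, i3, i4, i5⟩ := ih
      have hht := hG0 t ht
      have hmono : h t ≤ h (t+1) := by rw [hh t ht]; exact le_max_left _ _
      rw [Finset.sum_Ico_succ_top ht, Finset.sum_Ico_succ_top ht]
      rcases hht.eq_or_lt with h0 | hpos
      · have h0 := h0.symm
        obtain ⟨v0, s0⟩ := i3 h0
        have hc : gclip t = 0 := by
          rw [hgclip t ht, h0]; simp
        have hg : gt t = 0 := by rw [hgt t ht, hc]; simp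
        have hv' : v (t+1) = 0 := by rw [hvrec t ht, hg, v0]; simp
        have hs' : s (t+1) = 0 := by rw [hsrec t ht, hg, s0]; simp
        refine ⟨hv'.ge, by rw [hs']; linarith, fun _ => ⟨hv', hs'⟩, ?_, ?_⟩
        · rw [hv']; nlinarith [sq_nonneg (g t)]
        · rw [hc, hv', hs']
          rw [s0, v0, h0] at i5
          have e1 : Phi (0 + 2 * 0 * 0 + 16 * 0^2) 0 = 0 := by simp [Phi]
          rw [e1] at i5
          have e2 : Phi (0 + 2 * h (t+1) * 0 + 16 * (h (t+1))^2) 0 ≤ 0 := by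
            unfold Phi
            have := mul_nonneg (Real.sqrt_nonneg (0 + 2 * h (t+1) * 0 + 16 * (h (t+1))^2))
              (Real.exp_pos (0^2 / (4 * (0 + 2 * h (t+1) * 0 + 16 * (h (t+1))^2)))).le
            linarith
          nlinarith
      · have hxt' : xt t = eps * pred (h t) (v t + 2 * h t * s t + 16 * (h t)^2) (s t) := by
          rw [(hxt t ht).2 hpos.ne', pred, E]; ring
        have c1 : -(h t) ≤ gclip t := by rw [hgclip t ht]; exact le_max_left _ _
        have c2 : gclip t ≤ h t := by
          rw [hgclip t ht]; exact max_le (by linarith) (min_le_right _ _)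
        have c3 : (gclip t)^2 ≤ (g t)^2 := by
          rw [hgclip t ht]
          rcases le_total (g t) (h t) with a | a
          · rw [min_eq_left a]
            rcases le_total (-(h t)) (g t) with b | b
            · rw [max_eq_right b]
            · rw [max_eq_left b]; nlinarith
          · rw [min_eq_right a, max_eq_right (by linarith)]; nlinarith
        -- when s t < 0 the prediction is negative
        have hneg : s t < 0 → xt t < 0 := by
          intro hsn
          have hw : 0 < v t + 2 * h t * s t + 16 * (h t)^2 := by nlinarith [sq_pos_of_pos hpos]
          rw [hxt']
          apply mul_neg_of_pos_of_neg heps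
          unfold pred
          have a1 := mul_pos hpos (E_pos hw (s t))
          have a2 : 0 ≤ erfi (-(s t / (2 * Real.sqrt (v t + 2 * h t * s t + 16 * (h t)^2)))) := by
            apply erfi_nonneg
            rw [← neg_div]
            exact div_nonneg (by linarith) (by positivity)
          rw [erfi_neg] at a2
          linarith
        have main : gclip t * (x t - u) ≤ gt t * (xt t - u) ∧ (gt t = gclip t ∨ gt t = 0)
            ∧ (xt t < 0 → gt t ≤ 0) := by
          rw [hgt t ht, hx t ht]
          rcases le_or_gt 0 (xt t) with a | a
          · rw [max_eq_left a]
            simp [a.not_gt]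
          · rw [max_eq_right a.le]
            rcases le_or_gt (gclip t) 0 with b | b
            · have : gclip t * xt t ≥ gclip t * 0 := by nlinarith
              rw [if_pos this]
              exact ⟨by nlinarith, Or.inl rfl, fun _ => b⟩
            · have : ¬ (gclip t * xt t ≥ gclip t * 0) := by
                intro hcon; nlinarith [mul_neg_of_pos_of_neg b a]
              rw [if_neg this]
              exact ⟨by nlinarith, Or.inr rfl, fun _ => le_rfl⟩
        obtain ⟨m1, m2, m3⟩ := main
        have d1 : -(h t) ≤ gt t := by rcases m2 with m | m <;> rw [m] <;> linarith
        have d2 : gt t ≤ h t := by rcases m2 with m | m <;> rw [m] <;> linarith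
        have d3 : (gt t)^2 ≤ (g t)^2 := by
          rcases m2 with m | m <;> rw [m]
          · exact c3
          · nlinarith [sq_nonneg (g t)]
        have d4 : -(h t) ≤ s t - gt t := by
          rcases lt_or_ge (s t) 0 with a | a
          · have := m3 (hneg a); linarith
          · linarith
        have K := key hpos i1 i2 d4 d1 d2
        have hw1 : 0 < v t + (gt t)^2 + 2 * h t * (s t - gt t) + 16 * (h t)^2 := by
          nlinarith [sq_pos_of_pos hpos, sq_nonneg (gt t)]
        have hw2 : v t + (gt t)^2 + 2 * h t * (s t - gt t) + 16 * (h t)^2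
            ≤ v t + (gt t)^2 + 2 * h (t+1) * (s t - gt t) + 16 * (h (t+1))^2 := w_mono hpos.le hmono d4
        have A := Phi_anti (s t - gt t) hw1 hw2
        rw [hvrec t ht, hsrec t ht]
        refine ⟨by nlinarith [sq_nonneg (gt t)], by linarith, fun hz => by linarith, by linarith, ?_⟩
        have B := mul_le_mul_of_nonneg_left (A.trans (le_sub_iff_add_le.mpr K)) heps.le
        have e : gt t * (xt t - u) = eps * (gt t * pred (h t) (v t + 2 * h t * s t + 16 * (h t)^2) (s t)) - gt t * u := by
          rw [hxt']; ring
        rw [e] at m1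
        linarith
  -- the final scale equals `G`
  have hGh : ∀ t (ht : 1 ≤ t), h (t+1) = (Finset.Icc 1 t).sup' (Finset.nonempty_Icc.mpr ht) (fun t => |g t|) := by
    intro t ht
    induction t, ht using Nat.le_induction with
    | base => rw [hh 1 le_rfl, hh1]; simp
    | succ t ht ih =>
      rw [hh (t+1) (by omega), ih]
      apply le_antisymm
      · apply max_le
        · exact Finset.sup'_mono _ (Finset.Icc_subset_Icc_right (by omega)) _
        · exact Finset.le_sup' (fun t => |g t|) (Finset.mem_Icc.mpr ⟨by omega, le_rfl⟩)
      · apply Finset.sup'_le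
        intro i hi
        rw [Finset.mem_Icc] at hi
        rcases hi.2.eq_or_lt with a | a
        · rw [a]; exact le_max_right _ _
        · exact (Finset.le_sup' (fun t => |g t|) (Finset.mem_Icc.mpr ⟨hi.1, by omega⟩)).trans (le_max_left _ _)
  have hGT : h (T+1) = G := by rw [hG, hGh T hT]
  obtain ⟨i1, i2, i3, i4, i5⟩ := inv (T+1) (by omega)
  have hIco : Finset.Ico 1 (T+1) = Finset.Icc 1 T := by ext i; simp
  rw [hIco] at i4 i5
  rw [hGT] at i2 i3 i5
  have hGn : 0 ≤ G := by rw [← hGT]; exact hG0 _ (by omega)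
  have hlog : 0 ≤ Real.log (2 * u * eps⁻¹ + 1) :=
    Real.log_nonneg (by have : 0 ≤ 2 * u * eps⁻¹ := by positivity
                        linarith)
  have bound : ∑ t ∈ Finset.Icc 1 T, gclip t * (x t - u)
      ≤ eps * Real.sqrt ((∑ t ∈ Finset.Icc 1 T, (g t)^2) + 2 * G * S + 16 * G^2) + u * S := by
    rcases hGn.eq_or_lt with h0 | hpos
    · obtain ⟨v0, s0⟩ := i3 h0.symm
      rw [v0, s0, ← h0] at i5
      have e1 : Phi (0 + 2 * 0 * 0 + 16 * 0^2) 0 = 0 := by simp [Phi]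
      rw [e1] at i5
      have hS0 : 0 ≤ S := by rw [hS]; positivity
      have : 0 ≤ eps * Real.sqrt ((∑ t ∈ Finset.Icc 1 T, (g t)^2) + 2 * G * S + 16 * G^2) + u * S := by
        positivity
      linarith
    · have := final_bound (a := 1 + Real.sqrt (Real.log (2 * u * eps⁻¹ + 1))) heps hpos i1 i4 hu
        (by linarith [Real.sqrt_nonneg (Real.log (2 * u * eps⁻¹ + 1))]) i2
        (by
          rw [add_sub_cancel_left, Real.sq_sqrt hlog, Real.exp_log (by positivity)]; ring) hS
      linarith
  have split : ∑ t ∈ Finset.Icc 1 T, g t * (x t - u) ≤ ∑ t ∈ Finset.Icc 1 T, gclip t * (x t - u)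
      + ∑ t ∈ Finset.Icc 1 T, |g t - gclip t| * |x t - u| := by
    rw [← Finset.sum_add_distrib]
    apply Finset.sum_le_sum
    intro t _
    rw [← abs_mul]
    have := le_abs_self ((g t - gclip t) * (x t - u))
    linarith
  linarith
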